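/- arXiv:2211.00470 — 4 statements merged into one kernel-verified Lean document; each statement's English description precedes it below -/
import Mathlib

section
/- Let a ∈ ℝ and let c : ℝ → ℝ be measurable and positive on (0,+∞), and suppose there exists T > 0 such that ∫_T^{+∞} c(s)e^{-s} ds < +∞ (so for every t ≥ T the integral ∫_t^{+∞} c(s)e^{-s} ds lies in (0,+∞)). Then the ratio R(t) = (∫_t^{+∞} c(s)e^{-a·s} ds) / (∫_t^{+∞} c(s)e^{-s} ds), computed in [0,+∞], tends to 1 as t → +∞ if and only if a = 1. -/
open MeasureTheory Filter Set

/-- Let `a ∈ ℝ` and let `c : ℝ → ℝ` be measurable and positive on `(0,+∞)`, and suppose there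
exists `T > 0` such that `∫_T^{+∞} c(s)e^{-s} ds < +∞`.  Then the ratio
`(∫_t^{+∞} c(s)e^{-a·s} ds) / (∫_t^{+∞} c(s)e^{-s} ds)`, computed in `[0,+∞]`, tends to `1`
as `t → +∞` if and only if `a = 1`. -/
theorem limit_ratio_eq_one_iff (a : ℝ) (c : ℝ → ℝ) (hc_meas : Measurable c)
    (hc_pos : ∀ s ∈ Set.Ioi (0 : ℝ), 0 < c s)
    (T : ℝ) (hT : 0 < T)
    (hfin : ∫⁻ s in Set.Ioi T, ENNReal.ofReal (c s * Real.exp (-s)) < ⊤) :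
    Filter.Tendsto
      (fun t : ℝ =>
        (∫⁻ s in Set.Ioi t, ENNReal.ofReal (c s * Real.exp (-(a * s)))) /
          (∫⁻ s in Set.Ioi t, ENNReal.ofReal (c s * Real.exp (-s))))
      Filter.atTop (nhds 1) ↔ a = 1 := by
  have hDfin : ∀ t, T ≤ t → ∫⁻ s in Set.Ioi t, ENNReal.ofReal (c s * Real.exp (-s)) ≠ ⊤ :=
    fun t ht => ((lintegral_mono_set (Set.Ioi_subset_Ioi ht)).trans_lt hfin).ne
  have hmeas : Measurable fun s => ENNReal.ofReal (c s * Real.exp (-s)) := by fun_prop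
  have hDpos : ∀ t, T ≤ t → ∫⁻ s in Set.Ioi t, ENNReal.ofReal (c s * Real.exp (-s)) ≠ 0 := by
    intro t ht h0
    have h1 := (setLIntegral_pos_iff (μ := volume) (s := Set.Ioi t) hmeas).2 (by
      have : Set.Ioi t ⊆
          (Function.support fun s => ENNReal.ofReal (c s * Real.exp (-s))) ∩ Set.Ioi t := by
        intro s hs
        refine ⟨?_, hs⟩
        have hs0 : 0 < s := lt_trans (lt_of_lt_of_le hT ht) hs
        have := mul_pos (hc_pos s hs0) (Real.exp_pos (-s))
        exact (ENNReal.ofReal_pos.2 this).ne'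
      refine lt_of_lt_of_le ?_ (measure_mono this)
      simp)
    exact h1.ne' h0
  constructor
  · intro h
    rcases lt_trichotomy a 1 with ha | ha | ha
    · exfalso
      have hev : ∀ᶠ t in atTop, ENNReal.ofReal (Real.exp (1 - a)) ≤
          (∫⁻ s in Set.Ioi t, ENNReal.ofReal (c s * Real.exp (-(a * s)))) /
          (∫⁻ s in Set.Ioi t, ENNReal.ofReal (c s * Real.exp (-s))) := by
        filter_upwards [eventually_ge_atTop T, eventually_ge_atTop 1] with t ht ht1
        rw [ENNReal.le_div_iff_mul_le (Or.inl (hDpos t ht)) (Or.inl (hDfin t ht)),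
          ← lintegral_const_mul _ hmeas]
        refine setLIntegral_mono (by fun_prop) fun s hs => ?_
        have hs1 : 1 < s := lt_of_le_of_lt ht1 hs
        have hcs := hc_pos s (lt_trans one_pos hs1)
        rw [← ENNReal.ofReal_mul (Real.exp_pos _).le]
        apply ENNReal.ofReal_le_ofReal
        rw [mul_left_comm, ← Real.exp_add]
        refine mul_le_mul_of_nonneg_left (Real.exp_le_exp.2 ?_) hcs.le
        nlinarith
      have := ge_of_tendsto h hev
      rw [ENNReal.ofReal_le_one, Real.exp_le_one_iff] at this
      linarith
    · exact ha
    · exfalso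
      have hev : ∀ᶠ t in atTop,
          (∫⁻ s in Set.Ioi t, ENNReal.ofReal (c s * Real.exp (-(a * s)))) /
          (∫⁻ s in Set.Ioi t, ENNReal.ofReal (c s * Real.exp (-s)))
            ≤ ENNReal.ofReal (Real.exp (1 - a)) := by
        filter_upwards [eventually_ge_atTop T, eventually_ge_atTop 1] with t ht ht1
        rw [ENNReal.div_le_iff (hDpos t ht) (hDfin t ht),
          ← lintegral_const_mul _ hmeas]
        refine setLIntegral_mono (by fun_prop) fun s hs => ?_
        have hs1 : 1 < s := lt_of_le_of_lt ht1 hs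
        have hcs := hc_pos s (lt_trans one_pos hs1)
        rw [← ENNReal.ofReal_mul (Real.exp_pos _).le]
        apply ENNReal.ofReal_le_ofReal
        rw [mul_left_comm, ← Real.exp_add]
        refine mul_le_mul_of_nonneg_left (Real.exp_le_exp.2 ?_) hcs.le
        nlinarith
      have := le_of_tendsto h hev
      rw [ENNReal.one_le_ofReal, Real.one_le_exp_iff] at this
      linarith
  · rintro rfl
    refine tendsto_const_nhds.congr' ?_
    filter_upwards [eventually_ge_atTop T] with t ht
    simp only [one_mul]
    exact (ENNReal.div_self (hDpos t ht) (hDfin t ht)).symm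
end

section
/- Let a ∈ ℝ and let c : ℝ → ℝ be measurable and positive on (0,+∞), and suppose there exists T > 0 such that ∫_T^{+∞} c(s)e^{-s} ds < +∞ (so for every t ≥ T the integral ∫_t^{+∞} c(s)e^{-s} ds lies in (0,+∞)). Then the ratio R(t) = (∫_t^{+∞} c(s)e^{-a·s} ds) / (∫_t^{+∞} c(s)e^{-s} ds), computed in [0,+∞], tends to +∞ as t → +∞ if and only if a < 1. -/
open MeasureTheory Filter Set

/-- Let `a ∈ ℝ` and let `c : ℝ → ℝ` be measurable and positive on `(0,+∞)`, and suppose there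
exists `T > 0` such that `∫_T^{+∞} c(s)e^{-s} ds < +∞`.  Then the ratio
`(∫_t^{+∞} c(s)e^{-a·s} ds) / (∫_t^{+∞} c(s)e^{-s} ds)`, computed in `[0,+∞]`, tends to `+∞`
as `t → +∞` if and only if `a < 1`. -/
theorem limit_ratio_eq_top_iff (a : ℝ) (c : ℝ → ℝ) (hc_meas : Measurable c)
    (hc_pos : ∀ s ∈ Set.Ioi (0 : ℝ), 0 < c s)
    (T : ℝ) (hT : 0 < T)
    (hfin : ∫⁻ s in Set.Ioi T, ENNReal.ofReal (c s * Real.exp (-s)) < ⊤) :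
    Filter.Tendsto
      (fun t : ℝ =>
        (∫⁻ s in Set.Ioi t, ENNReal.ofReal (c s * Real.exp (-(a * s)))) /
          (∫⁻ s in Set.Ioi t, ENNReal.ofReal (c s * Real.exp (-s))))
      Filter.atTop (nhds ⊤) ↔ a < 1 := by
  constructor
  · intro h
    by_contra ha
    push Not at ha
    have hle : ∀ᶠ t : ℝ in atTop,
        (∫⁻ s in Set.Ioi t, ENNReal.ofReal (c s * Real.exp (-(a * s)))) /
          (∫⁻ s in Set.Ioi t, ENNReal.ofReal (c s * Real.exp (-s))) ≤ 1 := by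
      filter_upwards [eventually_ge_atTop T] with t ht
      apply ENNReal.div_le_of_le_mul
      rw [one_mul]
      apply setLIntegral_mono' measurableSet_Ioi
      intro s hs
      have hs0 : 0 < s := lt_trans (lt_of_lt_of_le hT ht) hs
      apply ENNReal.ofReal_le_ofReal
      apply mul_le_mul_of_nonneg_left _ (hc_pos s hs0).le
      apply Real.exp_le_exp.2
      nlinarith
    have h1 := le_of_tendsto h hle
    simp at h1
  · intro ha
    have hlim : Tendsto (fun t : ℝ => ENNReal.ofReal (Real.exp ((1 - a) * t))) atTop
        (nhds ⊤) := by
      apply ENNReal.tendsto_ofReal_atTop.comp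
      apply Real.tendsto_exp_atTop.comp
      exact tendsto_id.const_mul_atTop (by linarith)
    refine tendsto_of_tendsto_of_tendsto_of_le_of_le' hlim tendsto_const_nhds ?_
      (Eventually.of_forall fun _ => le_top)
    filter_upwards [eventually_ge_atTop T] with t ht
    have hmeas : Measurable fun s : ℝ => ENNReal.ofReal (c s * Real.exp (-s)) := by
      fun_prop
    have hpos : 0 < ∫⁻ s in Set.Ioi t, ENNReal.ofReal (c s * Real.exp (-s)) := by
      rw [setLIntegral_pos_iff hmeas]
      have : Set.Ioi t ⊆ (Function.support fun s : ℝ =>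
          ENNReal.ofReal (c s * Real.exp (-s))) ∩ Set.Ioi t := by
        intro s hs
        have hs0 : 0 < s := lt_trans (lt_of_lt_of_le hT ht) hs
        refine ⟨?_, hs⟩
        have := mul_pos (hc_pos s hs0) (Real.exp_pos (-s))
        simpa [Function.mem_support] using (ENNReal.ofReal_pos.2 this).ne'
      refine lt_of_lt_of_le ?_ (measure_mono this)
      simp
    have hft : ∫⁻ s in Set.Ioi t, ENNReal.ofReal (c s * Real.exp (-s)) < ⊤ :=
      lt_of_le_of_lt (lintegral_mono_set (Set.Ioi_subset_Ioi ht)) hfin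
    rw [ENNReal.le_div_iff_mul_le (Or.inl hpos.ne') (Or.inl hft.ne),
      ← lintegral_const_mul _ hmeas]
    apply setLIntegral_mono' measurableSet_Ioi
    intro s hs
    have hs0 : 0 < s := lt_trans (lt_of_lt_of_le hT ht) hs
    rw [← ENNReal.ofReal_mul (Real.exp_pos _).le]
    apply ENNReal.ofReal_le_ofReal
    rw [mul_left_comm, ← Real.exp_add]
    apply mul_le_mul_of_nonneg_left _ (hc_pos s hs0).le
    apply Real.exp_le_exp.2
    have : t < s := hs
    nlinarith
end

section
/- Let n₁, n₂ ≥ 1, let D₁ ⊆ ℂ^{n₁} and D₂ ⊆ ℂ^{n₂} be nonempty connected open sets, and let F be holomorphic on D₁ × D₂ with F not identically zero on D₁ × D₂. Let U ⊆ D₁ and V ⊆ D₂ be nonempty open subsets, and let f₁ be holomorphic on U and f₂ holomorphic on V such that F(x, y) = f₁(x) · f₂(y) for all (x, y) ∈ U × V. Then there exist a holomorphic function F₁ on D₁ and a holomorphic function F₂ on D₂ such that F₁ = f₁ on U, F₂ = f₂ on V, and F(x, y) = F₁(x) · F₂(y) for all (x, y) ∈ D₁ × D₂. -/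
open Set

open scoped Topology in
/-- Identity principle for complex differentiable functions on a complex normed space. -/
theorem identity_aux {E : Type*} [NormedAddCommGroup E] [NormedSpace ℂ E] {f : E → ℂ} {D : Set E}
    (hD : IsOpen D) (hc : IsPreconnected D) (hf : DifferentiableOn ℂ f D) {z₀ : E} (h₀ : z₀ ∈ D)
    (hz : f =ᶠ[𝓝 z₀] 0) : ∀ z ∈ D, f z = 0 := by
  let u : Set E := {x | f =ᶠ[𝓝 x] 0}
  have huo : IsOpen u := isOpen_setOfPred_eventually_nhds
  have main : closure u ∩ D ⊆ u := by
    rintro x ⟨hxu, hxD⟩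
    obtain ⟨r, hr, hball⟩ := Metric.isOpen_iff.1 hD x hxD
    obtain ⟨y, hyu, hy⟩ := Metric.mem_closure_iff.1 hxu r hr
    have hyb : y ∈ Metric.ball x r := by rwa [Metric.mem_ball, dist_comm]
    have key : ∀ z ∈ Metric.ball x r, f z = 0 := by
      intro z hzb
      let l : ℂ → E := fun t => y + t • (z - y)
      have hl : Differentiable ℂ l := by fun_prop
      let S : Set ℂ := l ⁻¹' Metric.ball x r
      have hSo : IsOpen S := Metric.isOpen_ball.preimage hl.continuous
      have hSc : Convex ℝ S := by
        intro a ha b hb p q hp hq hpq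
        have hh := (convex_ball x r) ha hb hp hq hpq
        have he : l (p • a + q • b) = p • l a + q • l b := by
          have hy1 : y = p • y + q • y := by rw [← add_smul, hpq, one_smul]
          simp only [l, smul_add, add_smul, smul_assoc]
          nth_rewrite 1 [hy1]
          abel
        change l (p • a + q • b) ∈ Metric.ball x r
        rw [he]
        exact hh
      have hdiff : DifferentiableOn ℂ (f ∘ l) S :=
        (hf.mono hball).comp hl.differentiableOn (fun t ht => ht)
      have hl0 : l 0 = y := by simp [l]
      have hl1 : l 1 = z := by simp [l]
      have h0S : (0 : ℂ) ∈ S := by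
        change l 0 ∈ Metric.ball x r
        rw [hl0]; exact hyb
      have h1S : (1 : ℂ) ∈ S := by
        change l 1 ∈ Metric.ball x r
        rw [hl1]; exact hzb
      have hev : f ∘ l =ᶠ[𝓝 0] 0 := by
        have ht : Filter.Tendsto l (𝓝 0) (𝓝 y) := by
          have := hl.continuous.tendsto 0
          rwa [hl0] at this
        exact ht.eventually hyu
      have := (hdiff.analyticOnNhd hSo).eqOn_zero_of_preconnected_of_eventuallyEq_zero
        hSc.isPreconnected h0S hev h1S
      simpa [hl1] using this
    exact Filter.eventually_of_mem (Metric.ball_mem_nhds x hr) key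
  have hsub : D ⊆ u := hc.subset_of_closure_inter_subset huo ⟨z₀, h₀, hz⟩ main
  exact fun z hzD => (hsub hzD).self_of_nhds

/-- Let `n₁, n₂ ≥ 1`, let `D₁ ⊆ ℂ^{n₁}`, `D₂ ⊆ ℂ^{n₂}` be nonempty connected open sets, and let
`F` be holomorphic on `D₁ × D₂` with `F` not identically zero on `D₁ × D₂`.  Let `U ⊆ D₁`,
`V ⊆ D₂` be nonempty open subsets, and let `f₁` be holomorphic on `U`, `f₂` holomorphic on `V`
with `F(x, y) = f₁(x) · f₂(y)` for all `(x, y) ∈ U × V`.  Then there exist a holomorphic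
function `F₁` on `D₁` and a holomorphic function `F₂` on `D₂` such that `F₁ = f₁` on `U`,
`F₂ = f₂` on `V`, and `F(x, y) = F₁(x) · F₂(y)` for all `(x, y) ∈ D₁ × D₂`. -/
theorem splitting_of_product_holomorphic (n₁ n₂ : ℕ) (hn₁ : 1 ≤ n₁) (hn₂ : 1 ≤ n₂)
    (D₁ : Set (Fin n₁ → ℂ)) (D₂ : Set (Fin n₂ → ℂ))
    (hD₁open : IsOpen D₁) (hD₂open : IsOpen D₂)
    (hD₁conn : IsConnected D₁) (hD₂conn : IsConnected D₂)
    (F : (Fin n₁ → ℂ) × (Fin n₂ → ℂ) → ℂ)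
    (hF : DifferentiableOn ℂ F (D₁ ×ˢ D₂))
    (hFne : ¬ ∀ p ∈ D₁ ×ˢ D₂, F p = 0)
    (U : Set (Fin n₁ → ℂ)) (V : Set (Fin n₂ → ℂ))
    (hUopen : IsOpen U) (hVopen : IsOpen V)
    (hUne : U.Nonempty) (hVne : V.Nonempty)
    (hUD : U ⊆ D₁) (hVD : V ⊆ D₂)
    (f₁ : (Fin n₁ → ℂ) → ℂ) (f₂ : (Fin n₂ → ℂ) → ℂ)
    (hf₁ : DifferentiableOn ℂ f₁ U) (hf₂ : DifferentiableOn ℂ f₂ V)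
    (hprod : ∀ x ∈ U, ∀ y ∈ V, F (x, y) = f₁ x * f₂ y) :
    ∃ (F₁ : (Fin n₁ → ℂ) → ℂ) (F₂ : (Fin n₂ → ℂ) → ℂ),
      DifferentiableOn ℂ F₁ D₁ ∧ DifferentiableOn ℂ F₂ D₂ ∧
      Set.EqOn F₁ f₁ U ∧ Set.EqOn F₂ f₂ V ∧
      ∀ x ∈ D₁, ∀ y ∈ D₂, F (x, y) = F₁ x * F₂ y := by
  have hDo : IsOpen (D₁ ×ˢ D₂) := hD₁open.prod hD₂open
  have hDc : IsPreconnected (D₁ ×ˢ D₂) := hD₁conn.isPreconnected.prod hD₂conn.isPreconnected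
  have hid : ∀ G : (Fin n₁ → ℂ) × (Fin n₂ → ℂ) → ℂ, DifferentiableOn ℂ G (D₁ ×ˢ D₂) →
      (∀ x ∈ U, ∀ y ∈ V, G (x, y) = 0) → ∀ p ∈ D₁ ×ˢ D₂, G p = 0 := by
    intro G hG h0
    obtain ⟨a, ha⟩ := hUne
    obtain ⟨b, hb⟩ := hVne
    refine identity_aux (z₀ := (a, b)) hDo hDc hG ⟨hUD ha, hVD hb⟩ ?_
    exact Filter.eventually_of_mem ((hUopen.prod hVopen).mem_nhds ⟨ha, hb⟩)
      (fun p hp => h0 p.1 hp.1 p.2 hp.2)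
  have hex : ∃ x ∈ U, ∃ y ∈ V, F (x, y) ≠ 0 := by
    by_contra! h
    exact hFne (hid F hF h)
  obtain ⟨a, ha, b, hb, hab⟩ := hex
  rw [hprod a ha b hb] at hab
  have ha0 : f₁ a ≠ 0 := left_ne_zero_of_mul hab
  have hb0 : f₂ b ≠ 0 := right_ne_zero_of_mul hab
  have hd₁ : DifferentiableOn ℂ (fun x => F (x, b) / f₂ b) D₁ := by
    simp only [div_eq_mul_inv]
    refine DifferentiableOn.mul_const ?_ _
    exact hF.comp (f := fun x => (x, b)) (by fun_prop) (fun x hx => ⟨hx, hVD hb⟩)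
  have hd₂ : DifferentiableOn ℂ (fun y => F (a, y) / f₁ a) D₂ := by
    simp only [div_eq_mul_inv]
    refine DifferentiableOn.mul_const ?_ _
    exact hF.comp (f := fun y => (a, y)) (by fun_prop) (fun y hy => ⟨hUD ha, hy⟩)
  refine ⟨fun x => F (x, b) / f₂ b, fun y => F (a, y) / f₁ a, hd₁, hd₂, ?_, ?_, ?_⟩
  · intro x hx
    simp only [hprod x hx b hb]
    field_simp
  · intro y hy
    simp only [hprod a ha y hy]
    field_simp
  · intro x hx y hy
    have := hid (fun p => F p - (F (p.1, b) / f₂ b) * (F (a, p.2) / f₁ a)) ?_ ?_ (x, y) ⟨hx, hy⟩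
    · exact sub_eq_zero.1 this
    · refine hF.sub (DifferentiableOn.mul ?_ ?_)
      · exact hd₁.comp (f := Prod.fst) (by fun_prop) (fun p hp => hp.1)
      · exact hd₂.comp (f := Prod.snd) (by fun_prop) (fun p hp => hp.2)
    · intro x hx y hy
      simp only [hprod x hx y hy, hprod x hx b hb, hprod a ha y hy]
      field_simp
      ring
end

section
/- Let T ∈ ℝ and let c : (T, +∞) → (0, +∞) be a measurable function such that t ↦ c(t)e^{−t} is decreasing (monotone nonincreasing) on (T, +∞) and ∫_{T₁}^{+∞} c(s)e^{−s} ds < +∞ for some T₁ > T. Then there exists a measurable function ĉ : (T, +∞) → (0, +∞) satisfying: (1) ĉ(t) ≥ c(t) for all t ∈ (T, +∞); (2) t ↦ ĉ(t)e^{−t} is strictly decreasing on (T, +∞), and ĉ is increasing (monotone nondecreasing) on (a, +∞) for some real number a > T; (3) ∫_{T₁}^{+∞} ĉ(s)e^{−s} ds < +∞. -/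
open MeasureTheory Set

lemma aux_smooth (F : ℝ → ℝ) (hF : Antitone F) (M : ℝ) (hM : ∀ x, F x ≤ M) (T₁ : ℝ)
    (hfin : ∫⁻ s in Set.Ioi T₁, ENNReal.ofReal (F s) < ⊤) (hF0 : ∀ x, 0 < F x) :
    ∃ h : ℝ → ℝ, Antitone h ∧ (∀ t, F t ≤ h t) ∧ (∀ t, h t ≤ M) ∧
      Monotone (fun t => Real.exp t * h t) ∧
      ∫⁻ s in Set.Ioi T₁, ENNReal.ofReal (h s) < ⊤ := by
  set G : ℝ → ENNReal := fun s => ENNReal.ofReal (F s) with hG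
  set E : ℝ → ENNReal := fun u => ENNReal.ofReal (Real.exp (-u)) with hE
  have hM0 : 0 < M := (hF0 0).trans_le (hM 0)
  have hGm : Measurable G := hF.measurable.ennreal_ofReal
  have hEm : Measurable E := by fun_prop
  have hGanti : Antitone G := fun x y hxy => ENNReal.ofReal_le_ofReal (hF hxy)
  have hGM : ∀ x, G x ≤ ENNReal.ofReal M := fun x => ENNReal.ofReal_le_ofReal (hM x)
  have hE1 : ∫⁻ u in Set.Ioi (0:ℝ), E u = 1 := by
    rw [hE, ← ofReal_integral_eq_lintegral_ofReal]
    · rw [integral_exp_neg_Ioi_zero]; simp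
    · exact integrableOn_exp_neg_Ioi 0
    · exact Filter.Eventually.of_forall fun u => (Real.exp_pos _).le
  have hEu : ∫⁻ u in Set.Ioi (0:ℝ), E u * ENNReal.ofReal u < ⊤ := by
    have h2 := Real.GammaIntegral_convergent (s := 2) (by norm_num)
    have h3 := h2.lintegral_lt_top
    refine lt_of_le_of_lt (setLIntegral_mono' measurableSet_Ioi ?_) h3
    intro u hu
    rw [hE, ← ENNReal.ofReal_mul (Real.exp_pos _).le]
    norm_num
  set H : ℝ → ENNReal := fun t => ∫⁻ u in Set.Ioi (0:ℝ), G (t - u) * E u with hH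
  have hHanti : Antitone H := by
    intro x y hxy
    refine lintegral_mono fun u => ?_
    exact mul_le_mul_left (hGanti (by linarith)) _
  have hHle : ∀ t, H t ≤ ENNReal.ofReal M := by
    intro t
    calc H t ≤ ∫⁻ u in Set.Ioi (0:ℝ), ENNReal.ofReal M * E u :=
          lintegral_mono fun u => mul_le_mul_left (hGM _) _
      _ = ENNReal.ofReal M := by rw [lintegral_const_mul _ hEm, hE1, mul_one]
  have hHge : ∀ t, G t ≤ H t := by
    intro t
    calc G t = ∫⁻ u in Set.Ioi (0:ℝ), G t * E u := by
          rw [lintegral_const_mul _ hEm, hE1, mul_one]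
      _ ≤ H t := by
          refine setLIntegral_mono' measurableSet_Ioi fun u hu => ?_
          have hu' : (0:ℝ) < u := hu
          exact mul_le_mul_left (hGanti (by linarith)) _
  have hHtop : ∀ t, H t ≠ ⊤ := fun t => ((hHle t).trans_lt ENNReal.ofReal_lt_top).ne
  have hHmono : ∀ x y, x ≤ y → H x ≤ ENNReal.ofReal (Real.exp (y - x)) * H y := by
    intro x y hxy
    rw [hH]
    simp only
    rw [← lintegral_const_mul _ (by fun_prop), ← lintegral_indicator measurableSet_Ioi,
      ← lintegral_indicator measurableSet_Ioi,
      ← lintegral_sub_right_eq_self _ (y - x)]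
    refine lintegral_mono fun u => ?_
    by_cases hu : (0:ℝ) < u - (y - x)
    · have hu2 : (0:ℝ) < u := by linarith
      rw [Set.indicator_of_mem (by exact hu), Set.indicator_of_mem (by exact hu2)]
      rw [mul_left_comm, hE]
      simp only
      rw [← ENNReal.ofReal_mul (Real.exp_pos _).le, ← Real.exp_add]
      apply le_of_eq
      congr 2
      · ring
      · congr 1; ring
    · rw [Set.indicator_of_notMem (by exact hu)]
      exact zero_le
  have hHint : ∫⁻ t in Set.Ioi T₁, H t < ⊤ := by
    rw [hH]
    simp only
    rw [lintegral_lintegral_swap (by fun_prop)]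
    set I := ∫⁻ s in Set.Ioi T₁, G s with hI
    have hb : ∀ u ∈ Set.Ioi (0:ℝ), ∫⁻ t in Set.Ioi T₁, G (t - u) * E u ≤
        ENNReal.ofReal M * (E u * ENNReal.ofReal u) + I * E u := by
      intro u hu
      rw [lintegral_mul_const _ (by fun_prop)]
      have : ∫⁻ t in Set.Ioi T₁, G (t - u) ≤ ENNReal.ofReal M * ENNReal.ofReal u + I := by
        calc ∫⁻ t in Set.Ioi T₁, G (t - u) = ∫⁻ s in Set.Ioi (T₁ - u), G s := by
              rw [← lintegral_indicator measurableSet_Ioi,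
                ← lintegral_indicator measurableSet_Ioi,
                ← lintegral_sub_right_eq_self ((Set.Ioi (T₁ - u)).indicator _) u]
              congr 1
              ext t
              simp [Set.indicator]
          _ ≤ ∫⁻ s in Set.Ioc (T₁ - u) T₁ ∪ Set.Ioi T₁, G s := by
              refine lintegral_mono_set ?_
              intro s hs
              rcases le_or_gt s T₁ with h | h
              · exact Or.inl ⟨hs, h⟩
              · exact Or.inr h
          _ ≤ (∫⁻ s in Set.Ioc (T₁ - u) T₁, G s) + I := lintegral_union_le _ _ _
          _ ≤ _ := by
              gcongr
              calc ∫⁻ s in Set.Ioc (T₁ - u) T₁, G s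
                  ≤ ∫⁻ s in Set.Ioc (T₁ - u) T₁, ENNReal.ofReal M := lintegral_mono hGM
                _ = _ := by simp
      calc _ ≤ (ENNReal.ofReal M * ENNReal.ofReal u + I) * E u := mul_le_mul_left this _
        _ = _ := by ring
    refine (setLIntegral_mono' measurableSet_Ioi hb).trans_lt ?_
    rw [lintegral_add_left (by fun_prop), lintegral_const_mul _ (by fun_prop),
      lintegral_const_mul _ (by fun_prop), hE1, mul_one]
    exact ENNReal.add_lt_top.2 ⟨ENNReal.mul_lt_top ENNReal.ofReal_lt_top hEu, hfin⟩
  refine ⟨fun t => (H t).toReal, ?_, ?_, ?_, ?_, ?_⟩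
  · intro x y hxy
    exact ENNReal.toReal_mono (hHtop x) (hHanti hxy)
  · intro t
    exact (ENNReal.ofReal_le_iff_le_toReal (hHtop t)).1 (hHge t)
  · intro t
    exact ENNReal.toReal_le_of_le_ofReal hM0.le (hHle t)
  · intro x y hxy
    have h := ENNReal.toReal_mono (ENNReal.mul_ne_top ENNReal.ofReal_ne_top (hHtop y))
      (hHmono x y hxy)
    rw [ENNReal.toReal_mul, ENNReal.toReal_ofReal (Real.exp_pos _).le] at h
    simp only
    calc Real.exp x * (H x).toReal ≤ Real.exp x * (Real.exp (y - x) * (H y).toReal) := by gcongr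
      _ = Real.exp y * (H y).toReal := by
        rw [← mul_assoc, ← Real.exp_add]; congr 2; ring
  · simpa only [ENNReal.ofReal_toReal (hHtop _)] using hHint

/-- Let `T ∈ ℝ` and let `c : (T, +∞) → (0, +∞)` be a measurable function such that
`t ↦ c(t)e^{−t}` is decreasing (monotone nonincreasing) on `(T, +∞)` and
`∫_{T₁}^{+∞} c(s)e^{−s} ds < +∞` for some `T₁ > T`.  Then there exists a measurable function
`cHat : (T, +∞) → (0, +∞)` such that: (1) `ĉ ≥ c` on `(T, +∞)`; (2) `t ↦ ĉ(t)e^{−t}` is strictly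
decreasing on `(T, +∞)` and `ĉ` is increasing (monotone nondecreasing) on `(a, +∞)` for some
`a > T`; (3) `∫_{T₁}^{+∞} ĉ(s)e^{−s} ds < +∞`. -/
theorem exists_increasing_dominating_gain (T T₁ : ℝ) (hT₁ : T < T₁)
    (c : ℝ → ℝ) (hc_meas : Measurable c)
    (hc_pos : ∀ t ∈ Set.Ioi T, 0 < c t)
    (hc_dec : AntitoneOn (fun t => c t * Real.exp (-t)) (Set.Ioi T))
    (hfin : ∫⁻ s in Set.Ioi T₁, ENNReal.ofReal (c s * Real.exp (-s)) < ⊤) :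
    ∃ cHat : ℝ → ℝ, Measurable cHat ∧ (∀ t ∈ Set.Ioi T, 0 < cHat t) ∧
      (∀ t ∈ Set.Ioi T, c t ≤ cHat t) ∧
      StrictAntiOn (fun t => cHat t * Real.exp (-t)) (Set.Ioi T) ∧
      (∃ a : ℝ, T < a ∧ MonotoneOn cHat (Set.Ioi a)) ∧
      ∫⁻ s in Set.Ioi T₁, ENNReal.ofReal (cHat s * Real.exp (-s)) < ⊤ := by
  set f : ℝ → ℝ := fun t => c t * Real.exp (-t) with hf
  obtain ⟨a, haT, haT₁⟩ := exists_between hT₁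
  have hfpos : ∀ t, T < t → 0 < f t := fun t ht => mul_pos (hc_pos t ht) (Real.exp_pos _)
  have hmem : ∀ x, max x a ∈ Set.Ioi T := fun x => haT.trans_le (le_max_right _ _)
  obtain ⟨h, h_anti, h_ge, h_le, h_mono, h_int⟩ := aux_smooth (fun x => f (max x a))
    (fun x y hxy => hc_dec (hmem x) (hmem y) (max_le_max_right a hxy)) (f a)
    (fun x => hc_dec haT (hmem x) (le_max_right _ _)) T₁
    (by
      refine lt_of_eq_of_lt (setLIntegral_congr_fun measurableSet_Ioi ?_) hfin
      intro s hs
      have : a ≤ s := (haT₁.trans hs).le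
      simp [max_eq_left this, hf])
    (fun x => hfpos _ (hmem x))
  have h_ge' : ∀ t, a < t → f t ≤ h t := fun t ht => by
    have := h_ge t
    rwa [max_eq_left ht.le] at this
  have hcf : ∀ t, c t = Real.exp t * f t := fun t => by
    rw [hf]; simp only
    rw [mul_left_comm, ← Real.exp_add]; simp
  have hexp : ∀ t x : ℝ, Real.exp t * x * Real.exp (-t) = x := fun t x => by
    rw [mul_right_comm, ← Real.exp_add]; simp
  set g : ℝ → ℝ := fun t => (if t ≤ a then f t else h t) + Real.exp (-t / 2) with hg
  refine ⟨fun t => Real.exp t * g t, ?_, ?_, ?_, ?_, ⟨a, haT, ?_⟩, ?_⟩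
  · have hh := h_anti.measurable
    have hfm : Measurable f := by fun_prop
    exact Real.measurable_exp.mul
      ((Measurable.ite measurableSet_Iic hfm hh).add (by fun_prop))
  · intro t ht
    refine mul_pos (Real.exp_pos _) (add_pos ?_ (Real.exp_pos _))
    split_ifs with hta
    · exact hfpos t ht
    · exact (hfpos t ht).trans_le (h_ge' t (not_le.1 hta))
  · intro t ht
    rw [hcf]
    refine mul_le_mul_of_nonneg_left ?_ (Real.exp_pos _).le
    have := Real.exp_pos (-t / 2)
    simp only [hg]
    split_ifs with hta
    · linarith
    · linarith [h_ge' t (not_le.1 hta)]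
  · intro x hx y hy hxy
    simp only [hexp]
    simp only [hg]
    have he : Real.exp (-y / 2) < Real.exp (-x / 2) := Real.exp_lt_exp.2 (by linarith)
    split_ifs with h1 h2 h2
    · have := hc_dec hx hy hxy.le
      exact add_lt_add_of_le_of_lt this he
    · linarith
    · have := hc_dec hx haT h2
      have := h_le y
      simp only [hf] at *
      linarith
    · linarith [h_anti hxy.le]
  · intro x hx y hy hxy
    have hx' : ¬ x ≤ a := not_le.2 hx
    have hy' : ¬ y ≤ a := not_le.2 hy
    simp only [hg, if_neg hx', if_neg hy', mul_add, ← Real.exp_add]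
    exact add_le_add (h_mono hxy) (Real.exp_le_exp.2 (by linarith))
  · simp only [hexp]
    have : ∫⁻ s in Set.Ioi T₁, ENNReal.ofReal (g s) ≤
        ∫⁻ s in Set.Ioi T₁, (ENNReal.ofReal (h s) + ENNReal.ofReal (Real.exp (-s / 2))) := by
      refine setLIntegral_mono' measurableSet_Ioi fun s hs => ?_
      have hs' : ¬ s ≤ a := not_le.2 (haT₁.trans hs)
      simp only [hg, if_neg hs']
      exact ENNReal.ofReal_add_le
    refine this.trans_lt ?_
    rw [lintegral_add_right _ (by fun_prop)]
    refine ENNReal.add_lt_top.2 ⟨h_int, ?_⟩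
    have h2 := (exp_neg_integrableOn_Ioi T₁ (b := 1 / 2) (by norm_num)).lintegral_lt_top
    refine lt_of_eq_of_lt ?_ h2
    congr 1
    ext s
    congr 2
    ring
end
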